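/- Let (H,d) be a Hadamard space, let (H^n,d^n) (n ∈ ℕ) be a sequence of Hadamard spaces, and suppose an asymptotic relation between (H^n) and H is given. Let f : H → (−∞,∞] and f^n : H^n → (−∞,∞] (n ∈ ℕ) be proper convex lower semicontinuous functions. Fix x ∈ H and choose x_n ∈ H^n with x_n → x in the asymptotic relation. If f^n → f in the sense of Mosco, then for every λ > 0: f^n_λ(x_n) → f_λ(x), and J^n_λ(x_n) → J_λ(x) in the asymptotic relation, where f_λ, f^n_λ are the Moreau–Yosida envelopes and J_λ, J^n_λ the resolvents of f and f^n. -/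

import Mathlib

open Filter Topology
open scoped Classical

/-- `γ`, restricted to `[0,1]`, is an affinely parametrized geodesic. -/
def IsGeodesic {H : Type*} [MetricSpace H] (γ : ℝ → H) : Prop :=
  ∀ s ∈ Set.Icc (0:ℝ) 1, ∀ t ∈ Set.Icc (0:ℝ) 1,
    dist (γ s) (γ t) = |s - t| * dist (γ 0) (γ 1)

/-- A Hadamard space: a complete geodesic metric space satisfying the CAT(0) inequality. -/
structure HadamardSpace (H : Type*) [MetricSpace H] [CompleteSpace H] : Prop where
  geodesic : ∀ x y : H, ∃ γ : ℝ → H, IsGeodesic γ ∧ γ 0 = x ∧ γ 1 = y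
  cat0 : ∀ (x : H) (γ : ℝ → H), IsGeodesic γ → ∀ t ∈ Set.Icc (0:ℝ) 1,
      dist x (γ t) ^ 2 ≤ (1 - t) * dist x (γ 0) ^ 2 + t * dist x (γ 1) ^ 2
        - t * (1 - t) * dist (γ 0) (γ 1) ^ 2

/-- A set is (geodesically) convex if it contains every geodesic segment between its points. -/
def GeodesicConvex {H : Type*} [MetricSpace H] (C : Set H) : Prop :=
  ∀ γ : ℝ → H, IsGeodesic γ → γ 0 ∈ C → γ 1 ∈ C → ∀ t ∈ Set.Icc (0:ℝ) 1, γ t ∈ C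

/-- A function `f : H → (−∞,∞]` is convex if it is convex along every geodesic. -/
def ConvexFun {H : Type*} [MetricSpace H] (f : H → EReal) : Prop :=
  ∀ γ : ℝ → H, IsGeodesic γ → ∀ t ∈ Set.Icc (0:ℝ) 1,
    f (γ t) ≤ ((1 - t : ℝ) : EReal) * f (γ 0) + ((t : ℝ) : EReal) * f (γ 1)

/-- `f` is strongly convex with parameter `β > 0`. -/
def StronglyConvexWith {H : Type*} [MetricSpace H] (β : ℝ) (f : H → EReal) : Prop :=
  ∀ γ : ℝ → H, IsGeodesic γ → ∀ t ∈ Set.Icc (0:ℝ) 1,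
    f (γ t) ≤ ((1 - t : ℝ) : EReal) * f (γ 0) + ((t : ℝ) : EReal) * f (γ 1)
      - ((β * (t * (1 - t)) * dist (γ 0) (γ 1) ^ 2 : ℝ) : EReal)

/-- `f : H → (−∞,∞]` is proper (not identically `∞`, never `−∞`), convex and lsc. -/
def ProperConvexLsc {H : Type*} [MetricSpace H] (f : H → EReal) : Prop :=
  (∃ x, f x ≠ ⊤) ∧ (∀ x, f x ≠ ⊥) ∧ ConvexFun f ∧ LowerSemicontinuous f

/-- `c` is an asymptotic center of the (bounded) sequence `x`:
it minimizes `y ↦ limsup_n d(y, x_n)²`. -/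
def IsAsymptoticCenter {H : Type*} [MetricSpace H] (x : ℕ → H) (c : H) : Prop :=
  ∀ y : H, limsup (fun n => dist c (x n) ^ 2) atTop ≤ limsup (fun n => dist y (x n) ^ 2) atTop

/-- `x` weakly converges to `c` if `c` is the asymptotic center of every subsequence of `x`. -/
def WeakConvSeq {H : Type*} [MetricSpace H] (x : ℕ → H) (c : H) : Prop :=
  ∀ φ : ℕ → ℕ, StrictMono φ → IsAsymptoticCenter (x ∘ φ) c

/-- Mosco convergence of `fn` to `f`. -/
def MoscoConv {H : Type*} [MetricSpace H] (fn : ℕ → H → EReal) (f : H → EReal) : Prop :=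
  (∀ (x : H) (xs : ℕ → H), Bornology.IsBounded (Set.range xs) → WeakConvSeq xs x →
      f x ≤ liminf (fun n => fn n (xs n)) atTop) ∧
  (∀ x : H, ∃ ys : ℕ → H, Tendsto ys atTop (𝓝 x) ∧
      Tendsto (fun n => fn n (ys n)) atTop (𝓝 (f x)))

/-- `p` is the resolvent `J_λ x` of `f` at `x`: it minimizes `y ↦ f(y) + d(x,y)²/(2λ)`. -/
def IsResolventPt {H : Type*} [MetricSpace H] (f : H → EReal) (lam : ℝ) (x p : H) : Prop :=
  ∀ y : H, f p + ((dist x p ^ 2 / (2 * lam) : ℝ) : EReal)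
    ≤ f y + ((dist x y ^ 2 / (2 * lam) : ℝ) : EReal)

/-- The Moreau–Yosida envelope `f_λ(x) = inf_y [f(y) + d(x,y)²/(2λ)]`. -/
noncomputable def MoreauEnv {H : Type*} [MetricSpace H] (f : H → EReal) (lam : ℝ) (x : H) :
    EReal :=
  ⨅ y : H, f y + ((dist x y ^ 2 / (2 * lam) : ℝ) : EReal)

/-- `p` is the metric projection of `x` onto `C`. -/
def IsProjPt {H : Type*} [MetricSpace H] (C : Set H) (x p : H) : Prop :=
  p ∈ C ∧ ∀ c ∈ C, dist x p ≤ dist x c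

/-- The indicator function of a set, with values in `(−∞,∞]`. -/
noncomputable def indicatorE {H : Type*} (C : Set H) : H → EReal :=
  fun x => if x ∈ C then (0 : EReal) else ⊤

/-- `y = S_t x` is the gradient-flow semigroup value:
the limit of the iterated resolvents `(J_{t/n})^{(n)} x`. -/
def IsGradientFlowPt {H : Type*} [MetricSpace H] (J : ℝ → H → H) (t : ℝ) (x y : H) : Prop :=
  Tendsto (fun n : ℕ => (J (t / (n : ℝ)))^[n] x) atTop (𝓝 y)

section AsymptoticRelation

variable {X : ℕ → Type*} {Y : Type*}

/-- Convergence of a sequence `x n ∈ X n` to `y ∈ Y` inside the disjoint union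
`(⊔ₙ Xₙ) ⊔ Y` equipped with a topology `τ`. -/
def SumConv (τ : TopologicalSpace ((Σ n, X n) ⊕ Y)) (x : ∀ n, X n) (y : Y) : Prop :=
  Tendsto (fun n => (Sum.inl ⟨n, x n⟩ : (Σ n, X n) ⊕ Y)) atTop (@nhds _ τ (Sum.inr y))

/-- An asymptotic relation between a sequence of metric spaces `X n` and a metric space `Y`:
a topology on the disjoint union `(⊔ₙ Xₙ) ⊔ Y` satisfying (A1)–(A4). -/
structure AsymptoticRelation (X : ℕ → Type*) [∀ n, MetricSpace (X n)]
    (Y : Type*) [MetricSpace Y] where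
  /-- The topology on the disjoint union. -/
  top : TopologicalSpace ((Σ n, X n) ⊕ Y)
  /-- (A1) Each `X n` is closed in the union and keeps its original topology. -/
  closedEmbedding_piece : ∀ n : ℕ,
    @IsClosedEmbedding (X n) _ _ top (fun x => Sum.inl ⟨n, x⟩)
  /-- (A1) `Y` is closed in the union and keeps its original topology. -/
  closedEmbedding_limit : @IsClosedEmbedding Y _ _ top Sum.inr
  /-- (A2) Every point of `Y` is a limit of a sequence `x n ∈ X n`. -/
  exists_approx : ∀ y : Y, ∃ x : ∀ n, X n, SumConv top x y
  /-- (A3) Distances converge along convergent sequences. -/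
  dist_conv : ∀ (x x' : ∀ n, X n) (y y' : Y), SumConv top x y → SumConv top x' y' →
    Tendsto (fun n => dist (x n) (x' n)) atTop (𝓝 (dist y y'))
  /-- (A4) Perturbations by vanishing distances preserve limits. -/
  conv_of_dist_tendsto_zero : ∀ (x x' : ∀ n, X n) (y : Y), SumConv top x y →
    Tendsto (fun n => dist (x n) (x' n)) atTop (𝓝 (0 : ℝ)) → SumConv top x' y

variable [∀ n, MetricSpace (X n)] [MetricSpace Y]

/-- A sequence `x n ∈ X n` is bounded if it stays at bounded distance from some
convergent sequence. -/
def ARBounded (τ : TopologicalSpace ((Σ n, X n) ⊕ Y)) (x : ∀ n, X n) : Prop :=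
  ∃ (x' : ∀ n, X n) (y : Y), SumConv τ x' y ∧ ∃ R : ℝ, ∀ n, dist (x n) (x' n) ≤ R

/-- Weak convergence of a (bounded) sequence `x n ∈ X n` to `c ∈ Y` along an asymptotic
relation: for every sequence of geodesics `γₙ` in `Xₙ` converging to a geodesic `γ` in `Y`
with `γ 0 = c`, the projections of `x n` onto `γₙ` converge to `c`. -/
def ARWeakConv (τ : TopologicalSpace ((Σ n, X n) ⊕ Y)) (x : ∀ n, X n) (c : Y) : Prop :=
  ∀ (γn : ∀ n, ℝ → X n) (γ : ℝ → Y),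
    (∀ n, IsGeodesic (γn n)) → IsGeodesic γ → γ 0 = c →
    SumConv τ (fun n => γn n 0) (γ 0) → SumConv τ (fun n => γn n 1) (γ 1) →
    ∀ p : ∀ n, X n, (∀ n, IsProjPt ((γn n) '' Set.Icc (0:ℝ) 1) (x n) (p n)) →
    SumConv τ p c

/-- Mosco convergence of functions `fn : X n → (−∞,∞]` to `f : Y → (−∞,∞]` along an
asymptotic relation. -/
def ARMosco (τ : TopologicalSpace ((Σ n, X n) ⊕ Y))
    (fn : ∀ n, X n → EReal) (f : Y → EReal) : Prop :=
  (∀ (c : Y) (x : ∀ n, X n), ARBounded τ x → ARWeakConv τ x c →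
      f c ≤ liminf (fun n => fn n (x n)) atTop) ∧
  (∀ c : Y, ∃ y : ∀ n, X n, SumConv τ y c ∧
      Tendsto (fun n => fn n (y n)) atTop (𝓝 (f c)))

end AsymptoticRelation

open scoped ENNReal

/-!
The resolvent minimizes `y ↦ f y + d(x, y)² / (2 λ)`, which is strongly convex with the same
constant for all the spaces, and Mosco convergence of the `f n` passes to these objectives because
the distance is weakly lower semicontinuous. Take a recovery sequence `y n` for the minimizer `p`
of the limit objective and walk from `y n` towards the minimizer `p n` of the `n`-th objective, at
most halfway and by at most `1`. A step of length `r n` lowers the value by at least `β (r n)²`.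
The endpoints form a bounded sequence, so weak compactness and the liminf inequality bound their
values from below by the limit value, which the values at `y n` approach; hence `r n → 0`, and
therefore `p n → p`.

Weak compactness of bounded sequences is proved by choosing a filter along which the asymptotic
radius cannot be lowered by refinement; the asymptotic center along it is the weak limit, because a
cluster point of the projections on a geodesic issuing from it would be another asymptotic center.
-/

section Filters

theorem exists_isCountablyGenerated_le_forall_le_eq {α β : Type*} [LinearOrder β]
    [TopologicalSpace β] [OrderClosedTopology β] [DenselyOrdered β]
    [TopologicalSpace.SeparableSpace β] {r : Filter α → β} (hr : Monotone r)
    (F₀ : Filter α) [F₀.NeBot] [F₀.IsCountablyGenerated] :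
    ∃ F ≤ F₀, F.NeBot ∧ F.IsCountablyGenerated ∧
      ∀ G ≤ F, G.NeBot → G.IsCountablyGenerated → r G = r F := by
  have : Nonempty β := ⟨r F₀⟩
  let q := TopologicalSpace.denseSeq β
  let T := {F : Filter α // F.NeBot ∧ F.IsCountablyGenerated}
  -- The `k`-th step passes to a finer filter with `r < q k` whenever there is one.
  have hstep (k : ℕ) (F : T) : ∃ G : T, G.1 ≤ F.1 ∧
      ((∃ K : T, K.1 ≤ F.1 ∧ r K.1 < q k) → r G.1 < q k) := by
    by_cases h : ∃ K : T, K.1 ≤ F.1 ∧ r K.1 < q k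
    · obtain ⟨K, hKF, hK⟩ := h
      exact ⟨K, hKF, fun _ ↦ hK⟩
    · exact ⟨F, le_rfl, fun h' ↦ absurd h' h⟩
  choose next next_le next_lt using hstep
  let Φ : ℕ → T := fun k ↦ Nat.rec ⟨F₀, inferInstance, inferInstance⟩ next k
  have hΦ : Antitone fun k ↦ (Φ k).1 := antitone_nat_of_succ_le fun k ↦ next_le k (Φ k)
  have hne : (⨅ k, (Φ k).1).NeBot :=
    have : Nonempty α := F₀.nonempty_of_neBot
    iInf_neBot_of_directed hΦ.directed_ge fun k ↦ (Φ k).2.1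
  have hcg : (⨅ k, (Φ k).1).IsCountablyGenerated :=
    have := fun k ↦ (Φ k).2.2
    inferInstance
  refine ⟨⨅ k, (Φ k).1, iInf_le _ 0, hne, hcg,
    fun G hG hGne hGcg ↦ (hr hG).eq_of_not_lt fun hlt ↦ ?_⟩
  obtain ⟨_, ⟨k, rfl⟩, hGk, hkF⟩ :=
    (TopologicalSpace.denseRange_denseSeq β).exists_between hlt
  have hk := next_lt k (Φ k) ⟨⟨G, hGne, hGcg⟩, hG.trans (iInf_le _ k), hGk⟩
  exact hk.not_ge (hkF.le.trans (hr (iInf_le (fun k ↦ (Φ k).1) (k + 1))))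

theorem exists_atTop_inf_principal_le {F : Filter ℕ} [F.NeBot] [F.IsCountablyGenerated]
    (hF : F ≤ atTop) : ∃ S : Set ℕ, (atTop ⊓ 𝓟 S).NeBot ∧ atTop ⊓ 𝓟 S ≤ F := by
  obtain ⟨φ, hφ⟩ := exists_seq_tendsto F
  refine ⟨Set.range φ, ?_, fun U hU ↦ ?_⟩
  · have hle : map φ atTop ≤ atTop ⊓ 𝓟 (Set.range φ) :=
      le_inf (hφ.mono_right hF) (by simp)
    exact NeBot.mono inferInstance hle
  · obtain ⟨K, hK⟩ := eventually_atTop.1 (hφ hU)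
    have hlarge : ∀ᶠ n in atTop, ∀ k < K, φ k < n :=
      (Set.finite_lt_nat K).eventually_all.2 fun k _ ↦ eventually_gt_atTop (φ k)
    refine eventually_inf_principal.2 (hlarge.mono ?_)
    rintro _ hn ⟨k, rfl⟩
    exact hK k (not_lt.1 fun hk ↦ (hn k hk).false)

end Filters

section ExtendedReals

theorem limsup_add_eq_of_tendsto {ι : Type*} {F : Filter ι} [F.NeBot] (u : ι → ℝ≥0∞)
    {v : ι → ℝ≥0∞} {b : ℝ≥0∞} (hb : b ≠ ∞) (hv : Tendsto v F (𝓝 b)) :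
    limsup (fun i ↦ u i + v i) F = limsup u F + b := by
  have hsub₁ : Tendsto (fun i ↦ v i - b) F (𝓝 0) := by
    simpa using ENNReal.Tendsto.sub hv tendsto_const_nhds (.inr hb)
  have hsub₂ : Tendsto (fun i ↦ b - v i) F (𝓝 0) := by
    simpa using ENNReal.Tendsto.sub tendsto_const_nhds hv (.inl hb)
  rw [← limsup_add_const F u b (by isBoundedDefault) (by isBoundedDefault)]
  apply le_antisymm
  · rw [← ENNReal.limsup_add_of_right_tendsto_zero hsub₁ fun i ↦ u i + b]
    refine limsup_le_limsup (.of_forall fun i ↦ ?_)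
    simpa only [Pi.add_apply, add_assoc] using add_le_add_right le_add_tsub (u i)
  · rw [← ENNReal.limsup_add_of_right_tendsto_zero hsub₂ fun i ↦ u i + v i]
    refine limsup_le_limsup (.of_forall fun i ↦ ?_)
    simpa only [Pi.add_apply, add_assoc] using add_le_add_right le_add_tsub (u i)

theorem tendsto_zero_of_add_le_of_le_liminf {ι : Type*} {F : Filter ι} {u v : ι → EReal}
    {δ : ι → ℝ} {m : ℝ} (hδ : ∀ i, 0 ≤ δ i) (huv : ∀ i, u i + δ i ≤ v i)
    (hu : (m : EReal) ≤ liminf u F) (hv : Tendsto v F (𝓝 m)) : Tendsto δ F (𝓝 0) := by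
  refine tendsto_order.2 ⟨fun ε hε ↦ .of_forall fun i ↦ hε.trans_le (hδ i), fun ε hε ↦ ?_⟩
  have hlow : ((m - ε / 2 : ℝ) : EReal) < liminf u F :=
    (EReal.coe_lt_coe_iff.2 (by linarith)).trans_le hu
  have hupp : (m : EReal) < ((m + ε / 2 : ℝ) : EReal) := EReal.coe_lt_coe_iff.2 (by linarith)
  filter_upwards [eventually_lt_of_lt_liminf hlow, hv.eventually_lt_const hupp] with i h₁ h₂
  have hlt : ((m - ε / 2 : ℝ) : EReal) + δ i < ((m + ε / 2 : ℝ) : EReal) :=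
    ((add_le_add_left h₁.le _).trans (huv i)).trans_lt h₂
  norm_cast at hlt
  linarith

theorem tendsto_zero_of_mul_sq_min {ι : Type*} {F : Filter ι} {β : ℝ} (hβ : β ≠ 0) {u : ι → ℝ}
    (hu : ∀ i, 0 ≤ u i) (h : Tendsto (fun i ↦ β * min (u i) 1 ^ 2) F (𝓝 0)) :
    Tendsto u F (𝓝 0) := by
  have hmin : Tendsto (fun i ↦ min (u i) 1) F (𝓝 0) := by
    have hsq := (h.const_mul β⁻¹).sqrt
    simpa only [inv_mul_cancel_left₀ hβ, Real.sqrt_sq (le_min (hu _) zero_le_one), mul_zero,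
      Real.sqrt_zero] using hsq
  refine hmin.congr' ?_
  filter_upwards [hmin.eventually_lt_const one_pos] with i hi
  exact min_eq_left ((min_lt_iff.1 hi).resolve_right (lt_irrefl 1)).le

theorem tendsto_ereal_add_coe {ι : Type*} {F : Filter ι} {u : ι → EReal} {a : EReal} {v : ι → ℝ}
    {b : ℝ} (hu : Tendsto u F (𝓝 a)) (hv : Tendsto v F (𝓝 b)) :
    Tendsto (fun i ↦ u i + v i) F (𝓝 (a + b)) :=
  (EReal.continuousAt_add (.inr (EReal.coe_ne_bot b)) (.inr (EReal.coe_ne_top b))).tendsto.comp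
    (hu.prodMk_nhds (EReal.tendsto_coe.2 hv))

end ExtendedReals

theorem exists_eq_iInf_of_sq_iInf_add_le {Y : Type*} [MetricSpace Y] [CompleteSpace Y]
    {φ : Y → ℝ≥0∞} (hφ : LowerSemicontinuous φ) (hfin : ⨅ y, φ y ≠ ∞)
    (hmid : ∀ y z, (⨅ w, φ w) ^ 2 + (edist y z / 2) ^ 2 ≤ max (φ y) (φ z) ^ 2) :
    ∃ c, φ c = ⨅ y, φ y := by
  have : Nonempty Y := not_isEmpty_iff.1 fun _ ↦ hfin (iInf_of_empty φ)
  obtain ⟨a, ha, hlim, haφ⟩ :=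
    exists_seq_tendsto_sInf (Set.range_nonempty φ) (OrderBot.bddBelow _)
  choose y hy using haφ
  obtain rfl : a = φ ∘ y := funext fun k ↦ (hy k).symm
  have hcauchy : CauchySeq y := by
    refine EMetric.cauchySeq_iff.2 fun ε hε ↦ ?_
    have hlt : (⨅ w, φ w) ^ 2 < (⨅ w, φ w) ^ 2 + (ε / 2) ^ 2 :=
      ENNReal.lt_add_right (ENNReal.pow_ne_top hfin)
        (pow_ne_zero 2 (ENNReal.div_ne_zero.2 ⟨hε.ne', by simp⟩))
    obtain ⟨N, hN⟩ := ((ENNReal.Tendsto.pow hlim).eventually_lt_const hlt).exists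
    refine ⟨N, fun m hm n hn ↦ ?_⟩
    have hmn : (⨅ w, φ w) ^ 2 + (edist (y m) (y n) / 2) ^ 2 < (⨅ w, φ w) ^ 2 + (ε / 2) ^ 2 :=
      calc _ ≤ max (φ (y m)) (φ (y n)) ^ 2 := hmid _ _
        _ ≤ φ (y N) ^ 2 := by gcongr; exact max_le (ha hm) (ha hn)
        _ < _ := hN
    have hhalf := lt_of_pow_lt_pow_left' 2 (lt_of_add_lt_add_left hmn)
    exact lt_of_not_ge fun hle ↦ hhalf.not_ge (by gcongr)
  obtain ⟨c, hc⟩ := cauchySeq_tendsto_of_complete hcauchy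
  refine ⟨c, le_antisymm ?_ (iInf_le φ c)⟩
  calc φ c ≤ liminf φ (𝓝 c) := lowerSemicontinuousAt_iff_le_liminf.1 (hφ c)
    _ ≤ liminf φ (map y atTop) := liminf_le_liminf_of_le hc
    _ = ⨅ y, φ y := hlim.liminf_eq

/-- A metric space in which any two points are joined by a geodesic. -/
def IsGeodesicSpace (X : Type*) [MetricSpace X] : Prop :=
  ∀ x y : X, ∃ γ : ℝ → X, IsGeodesic γ ∧ γ 0 = x ∧ γ 1 = y

/-- A CAT(0) space: a geodesic space satisfying the CAT(0) inequality. A Hadamard space is a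
complete CAT(0) space. -/
structure IsCAT0Space (X : Type*) [MetricSpace X] : Prop where
  geodesic : IsGeodesicSpace X
  cat0 : ∀ (x : X) (γ : ℝ → X), IsGeodesic γ → ∀ t ∈ Set.Icc (0 : ℝ) 1,
    dist x (γ t) ^ 2 ≤ (1 - t) * dist x (γ 0) ^ 2 + t * dist x (γ 1) ^ 2
      - t * (1 - t) * dist (γ 0) (γ 1) ^ 2

section Geodesics

variable {X : Type*} [MetricSpace X]

theorem HadamardSpace.isCAT0Space [CompleteSpace X] (hX : HadamardSpace X) : IsCAT0Space X :=
  ⟨hX.geodesic, hX.cat0⟩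

theorem IsGeodesic.dist_zero_left {γ : ℝ → X} (hγ : IsGeodesic γ) {t : ℝ}
    (ht : t ∈ Set.Icc (0 : ℝ) 1) : dist (γ 0) (γ t) = t * dist (γ 0) (γ 1) := by
  rw [hγ 0 (by simp) t ht, zero_sub, abs_neg, abs_of_nonneg ht.1]

theorem IsGeodesic.continuousOn {γ : ℝ → X} (hγ : IsGeodesic γ) :
    ContinuousOn γ (Set.Icc 0 1) :=
  LipschitzOnWith.continuousOn (K := nndist (γ 0) (γ 1)) <|
    .of_dist_le_mul fun s hs t ht ↦ by rw [hγ s hs t ht, Real.dist_eq, coe_nndist, mul_comm]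

theorem IsGeodesic.exists_isProjPt {γ : ℝ → X} (hγ : IsGeodesic γ) (x : X) :
    ∃ p, IsProjPt (γ '' Set.Icc (0 : ℝ) 1) x p :=
  (isCompact_Icc.image_of_continuousOn hγ.continuousOn).exists_isMinOn
    ⟨γ 0, Set.mem_image_of_mem γ (by simp)⟩ (f := dist x) (by fun_prop)

theorem IsGeodesic.comp_lineMap {γ : ℝ → X} (hγ : IsGeodesic γ) {s t : ℝ}
    (hs : s ∈ Set.Icc (0 : ℝ) 1) (ht : t ∈ Set.Icc (0 : ℝ) 1) :
    IsGeodesic (γ ∘ AffineMap.lineMap s t) := by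
  have hmem {u : ℝ} (hu : u ∈ Set.Icc (0 : ℝ) 1) :
      AffineMap.lineMap s t u ∈ Set.Icc (0 : ℝ) 1 :=
    (convex_Icc 0 1).lineMap_mem hs ht hu
  intro u hu v hv
  simp only [Function.comp_apply, AffineMap.lineMap_apply_zero, AffineMap.lineMap_apply_one]
  rw [hγ _ (hmem hu) _ (hmem hv), hγ s hs t ht, ← Real.dist_eq, dist_lineMap_lineMap,
    Real.dist_eq, Real.dist_eq, mul_assoc]

theorem IsCAT0Space.sq_dist_add_sq_dist_le (hX : IsCAT0Space X) {γ : ℝ → X} (hγ : IsGeodesic γ)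
    {x : X} (hmin : ∀ t ∈ Set.Icc (0 : ℝ) 1, dist x (γ 0) ≤ dist x (γ t)) :
    dist x (γ 0) ^ 2 + dist (γ 0) (γ 1) ^ 2 ≤ dist x (γ 1) ^ 2 := by
  have hbound : ∀ t ∈ Set.Ioc (0 : ℝ) 1,
      dist x (γ 0) ^ 2 + (1 - t) * dist (γ 0) (γ 1) ^ 2 ≤ dist x (γ 1) ^ 2 := by
    rintro t ht
    have htI := Set.Ioc_subset_Icc_self ht
    have hsq : dist x (γ 0) ^ 2 ≤ dist x (γ t) ^ 2 := by gcongr; exact hmin t htI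
    refine le_of_mul_le_mul_left ?_ ht.1
    linarith [hX.cat0 x γ hγ t htI]
  have hcont : Continuous fun t : ℝ ↦ dist x (γ 0) ^ 2 + (1 - t) * dist (γ 0) (γ 1) ^ 2 := by
    fun_prop
  have hlim := (hcont.tendsto 0).mono_left (nhdsWithin_le_nhds (s := Set.Ioi 0))
  rw [sub_zero, one_mul] at hlim
  exact le_of_tendsto hlim ((eventually_mem_set.2 (Ioc_mem_nhdsGT one_pos)).mono hbound)

theorem IsCAT0Space.dist_le_of_isProjPt (hX : IsCAT0Space X) {γ : ℝ → X} (hγ : IsGeodesic γ)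
    {q p : X} (hp : IsProjPt (γ '' Set.Icc (0 : ℝ) 1) q p) : dist p (γ 1) ≤ dist q (γ 1) := by
  obtain ⟨⟨s, hs, rfl⟩, hmin⟩ := hp
  have h1 : (1 : ℝ) ∈ Set.Icc (0 : ℝ) 1 := by simp
  have hpyth := hX.sq_dist_add_sq_dist_le (hγ.comp_lineMap hs h1) (x := q) fun t ht ↦ by
    rw [Function.comp_apply, AffineMap.lineMap_apply_zero]
    exact hmin _ (Set.mem_image_of_mem γ ((convex_Icc 0 1).lineMap_mem hs h1 ht))
  simp only [Function.comp_apply, AffineMap.lineMap_apply_zero, AffineMap.lineMap_apply_one]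
    at hpyth
  exact le_of_sq_le_sq (by linarith [sq_nonneg (dist q (γ s))]) dist_nonneg

theorem IsCAT0Space.sq_edist_midpoint_add_le (hX : IsCAT0Space X) {γ : ℝ → X} (hγ : IsGeodesic γ)
    (x : X) : edist x (γ (1 / 2)) ^ 2 + (edist (γ 0) (γ 1) / 2) ^ 2
      ≤ max (edist x (γ 0)) (edist x (γ 1)) ^ 2 := by
  have hcat := hX.cat0 x γ hγ (1 / 2) ⟨by norm_num, by norm_num⟩
  have h₀ : dist x (γ 0) ^ 2 ≤ max (dist x (γ 0)) (dist x (γ 1)) ^ 2 := by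
    gcongr; exact le_max_left _ _
  have h₁ : dist x (γ 1) ^ 2 ≤ max (dist x (γ 0)) (dist x (γ 1)) ^ 2 := by
    gcongr; exact le_max_right _ _
  have hle : dist x (γ (1 / 2)) ^ 2 + (dist (γ 0) (γ 1) / 2) ^ 2
      ≤ max (dist x (γ 0)) (dist x (γ 1)) ^ 2 := by linarith
  have htwo : (2 : ℝ≥0∞) = ENNReal.ofReal 2 := by simp
  simp only [edist_dist, htwo]
  rw [← ENNReal.ofReal_div_of_pos two_pos, ← ENNReal.ofReal_pow dist_nonneg,
    ← ENNReal.ofReal_pow (by positivity), ← ENNReal.ofReal_add (by positivity) (by positivity),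
    ← ENNReal.ofReal_max, ← ENNReal.ofReal_pow (by positivity)]
  exact ENNReal.ofReal_le_ofReal hle

end Geodesics

/-- The function `y ↦ f y + d(x, y)² / (2 λ)` whose infimum is the Moreau–Yosida envelope of `f`
and whose minimizer is the resolvent of `f`. -/
noncomputable def moreauObjective {X : Type*} [MetricSpace X] (f : X → EReal) (lam : ℝ)
    (x y : X) : EReal :=
  f y + ((dist x y ^ 2 / (2 * lam) : ℝ) : EReal)

section Convexity

variable {X : Type*} [MetricSpace X] {f : X → EReal} {lam : ℝ} {x p : X}

theorem IsResolventPt.moreauEnv_eq (hp : IsResolventPt f lam x p) :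
    MoreauEnv f lam x = moreauObjective f lam x p :=
  le_antisymm (iInf_le _ p) (le_iInf hp)

theorem IsResolventPt.ne_top (hp : IsResolventPt f lam x p) (hf : ∃ y, f y ≠ ⊤) : f p ≠ ⊤ := by
  obtain ⟨y, hy⟩ := hf
  intro htop
  have h := hp y
  rw [htop, EReal.top_add_coe, top_le_iff] at h
  exact EReal.add_ne_top hy (EReal.coe_ne_top _) h

theorem ConvexFun.stronglyConvexWith_moreauObjective (hX : IsCAT0Space X) (hf : ConvexFun f)
    (hlam : 0 ≤ lam) (x : X) : StronglyConvexWith (1 / (2 * lam)) (moreauObjective f lam x) := by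
  intro γ hγ t ht
  have hquad : dist x (γ t) ^ 2 / (2 * lam) ≤ (1 - t) * (dist x (γ 0) ^ 2 / (2 * lam))
      + t * (dist x (γ 1) ^ 2 / (2 * lam))
      - 1 / (2 * lam) * (t * (1 - t)) * dist (γ 0) (γ 1) ^ 2 :=
    calc dist x (γ t) ^ 2 / (2 * lam)
        ≤ ((1 - t) * dist x (γ 0) ^ 2 + t * dist x (γ 1) ^ 2
            - t * (1 - t) * dist (γ 0) (γ 1) ^ 2) / (2 * lam) := by
          gcongr; exact hX.cat0 x γ hγ t ht
      _ = _ := by ring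
  have hdistrib {s : ℝ} (a : EReal) (b : ℝ) (hs : 0 ≤ s) :
      (s : EReal) * (a + b) = s * a + (s * b : ℝ) := by
    rw [EReal.left_distrib_of_nonneg_of_ne_top (EReal.coe_nonneg.2 hs) (EReal.coe_ne_top s),
      EReal.coe_mul]
  calc moreauObjective f lam x (γ t)
      ≤ ((1 - t : ℝ) * f (γ 0) + (t : ℝ) * f (γ 1))
        + (((1 - t) * (dist x (γ 0) ^ 2 / (2 * lam)) + t * (dist x (γ 1) ^ 2 / (2 * lam))
          - 1 / (2 * lam) * (t * (1 - t)) * dist (γ 0) (γ 1) ^ 2 : ℝ) : EReal) :=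
        add_le_add (hf γ hγ t ht) (EReal.coe_le_coe_iff.2 hquad)
    _ = _ := by
        simp only [moreauObjective]
        rw [hdistrib _ _ (sub_nonneg.2 ht.2), hdistrib _ _ ht.1, EReal.coe_sub (_ + _),
          ← add_sub_assoc, EReal.coe_add, add_add_add_comm]

theorem StronglyConvexWith.exists_dist_eq_add_le (hX : IsGeodesicSpace X) {β : ℝ} (hβ : 0 ≤ β)
    {φ : X → EReal} (hφ : StronglyConvexWith β φ) {y p : X} (hpy : φ p ≤ φ y) {r : ℝ}
    (hr : 0 ≤ r) (hrd : 2 * r ≤ dist y p) :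
    ∃ z, dist y z = r ∧ φ z + (β * r ^ 2 : ℝ) ≤ φ y := by
  obtain ⟨γ, hγ, rfl, rfl⟩ := hX y p
  obtain ⟨t, ht, rfl⟩ : ∃ t ∈ Set.Icc (0 : ℝ) (1 / 2), t * dist (γ 0) (γ 1) = r := by
    refine ⟨r / dist (γ 0) (γ 1), ⟨by positivity, div_le_of_le_mul₀ dist_nonneg ?_ ?_⟩,
      div_mul_cancel_of_imp fun hd ↦ ?_⟩ <;> linarith
  have htI : t ∈ Set.Icc (0 : ℝ) 1 := Set.Icc_subset_Icc_right (by norm_num) ht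
  refine ⟨γ t, hγ.dist_zero_left htI, ?_⟩
  have hcomb : ((1 - t : ℝ) : EReal) * φ (γ 0) + (t : ℝ) * φ (γ 1) ≤ φ (γ 0) :=
    calc ((1 - t : ℝ) : EReal) * φ (γ 0) + (t : ℝ) * φ (γ 1)
        ≤ ((1 - t : ℝ) : EReal) * φ (γ 0) + (t : ℝ) * φ (γ 0) := by
          gcongr; exact EReal.coe_nonneg.2 ht.1
      _ = φ (γ 0) := by
          rw [← EReal.right_distrib_of_nonneg (EReal.coe_nonneg.2 (sub_nonneg.2 htI.2))
            (EReal.coe_nonneg.2 ht.1), ← EReal.coe_add, sub_add_cancel, EReal.coe_one, one_mul]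
  have hsq : β * (t * dist (γ 0) (γ 1)) ^ 2 ≤ β * (t * (1 - t)) * dist (γ 0) (γ 1) ^ 2 := by
    rw [mul_pow, mul_assoc β, sq t]
    gcongr
    · exact ht.1
    · linarith [ht.2]
  calc φ (γ t) + (β * (t * dist (γ 0) (γ 1)) ^ 2 : ℝ)
      ≤ φ (γ t) + (β * (t * (1 - t)) * dist (γ 0) (γ 1) ^ 2 : ℝ) := by gcongr
    _ ≤ ((1 - t : ℝ) : EReal) * φ (γ 0) + (t : ℝ) * φ (γ 1) :=
        EReal.add_le_of_le_sub (hφ γ hγ t htI)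
    _ ≤ φ (γ 0) := hcomb

end Convexity

section AsymptoticCenter

variable {X : ℕ → Type*} [∀ n, MetricSpace (X n)] {Y : Type*} [MetricSpace Y]
  {A : AsymptoticRelation X Y} {p : ∀ n, X n} {F G : Filter ℕ}

theorem AsymptoticRelation.sumConv_geodesic (A : AsymptoticRelation X Y)
    (hX : ∀ n, IsCAT0Space (X n)) {γn : ∀ n, ℝ → X n} {γ : ℝ → Y}
    (hγn : ∀ n, IsGeodesic (γn n)) (hγ : IsGeodesic γ)
    (h₀ : SumConv A.top (fun n ↦ γn n 0) (γ 0)) (h₁ : SumConv A.top (fun n ↦ γn n 1) (γ 1))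
    {t : ℝ} (ht : t ∈ Set.Icc (0 : ℝ) 1) : SumConv A.top (fun n ↦ γn n t) (γ t) := by
  obtain ⟨w, hw⟩ := A.exists_approx (γ t)
  refine A.conv_of_dist_tendsto_zero w _ _ hw ?_
  have hlim := ((((A.dist_conv _ _ _ _ hw h₀).pow 2).const_mul (1 - t)).add
    (((A.dist_conv _ _ _ _ hw h₁).pow 2).const_mul t)).sub
    (((A.dist_conv _ _ _ _ h₀ h₁).pow 2).const_mul (t * (1 - t)))
  have hzero : (1 - t) * dist (γ t) (γ 0) ^ 2 + t * dist (γ t) (γ 1) ^ 2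
      - t * (1 - t) * dist (γ 0) (γ 1) ^ 2 = 0 := by
    rw [hγ t ht 0 (by simp), hγ t ht 1 (by simp), mul_pow, mul_pow, sq_abs, sq_abs]
    ring
  rw [hzero] at hlim
  have hsq : Tendsto (fun n ↦ dist (w n) (γn n t) ^ 2) atTop (𝓝 0) :=
    squeeze_zero (fun _ ↦ sq_nonneg _) (fun n ↦ (hX n).cat0 _ _ (hγn n) t ht) hlim
  simpa only [Real.sqrt_sq dist_nonneg, Real.sqrt_zero] using hsq.sqrt

theorem AsymptoticRelation.tendsto_edist (A : AsymptoticRelation X Y) {x x' : ∀ n, X n} {y y' : Y}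
    (hx : SumConv A.top x y) (hx' : SumConv A.top x' y') :
    Tendsto (fun n ↦ edist (x n) (x' n)) atTop (𝓝 (edist y y')) := by
  simpa only [edist_dist] using ENNReal.tendsto_ofReal (A.dist_conv _ _ _ _ hx hx')

/-- A chosen sequence converging to `y` along the asymptotic relation. -/
noncomputable def AsymptoticRelation.approx (A : AsymptoticRelation X Y) (y : Y) : ∀ n, X n :=
  (A.exists_approx y).choose

theorem AsymptoticRelation.sumConv_approx (A : AsymptoticRelation X Y) (y : Y) :
    SumConv A.top (A.approx y) y :=
  (A.exists_approx y).choose_spec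

/-- The asymptotic distance `limsup d(p n, y n)` along `F` of the sequence `p` to the point `y`,
for `y n → y`. By (A3) it does not depend on the choice of `y n` when `F ≤ atTop`. -/
noncomputable def AsymptoticRelation.limsupDist (A : AsymptoticRelation X Y) (p : ∀ n, X n)
    (F : Filter ℕ) (y : Y) : ℝ≥0∞ :=
  limsup (fun n ↦ edist (p n) (A.approx y n)) F

theorem limsup_edist_le_of_tendsto (p : ∀ n, X n) {u v : ∀ n, X n}
    (huv : Tendsto (fun n ↦ edist (u n) (v n)) F (𝓝 0)) :
    limsup (fun n ↦ edist (p n) (v n)) F ≤ limsup (fun n ↦ edist (p n) (u n)) F :=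
  calc limsup (fun n ↦ edist (p n) (v n)) F
      ≤ limsup ((fun n ↦ edist (p n) (u n)) + fun n ↦ edist (u n) (v n)) F :=
        limsup_le_limsup (.of_forall fun n ↦ edist_triangle (p n) (u n) (v n))
    _ = limsup (fun n ↦ edist (p n) (u n)) F := ENNReal.limsup_add_of_right_tendsto_zero huv _

theorem AsymptoticRelation.limsup_edist_eq (hF : F ≤ atTop) (p : ∀ n, X n) {yn : ∀ n, X n}
    {y : Y} (hy : SumConv A.top yn y) :
    limsup (fun n ↦ edist (p n) (yn n)) F = A.limsupDist p F y := by
  have h₁ := (A.tendsto_edist (A.sumConv_approx y) hy).mono_left hF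
  have h₂ := (A.tendsto_edist hy (A.sumConv_approx y)).mono_left hF
  rw [edist_self] at h₁ h₂
  exact le_antisymm (limsup_edist_le_of_tendsto p h₁) (limsup_edist_le_of_tendsto p h₂)

theorem ARBounded.exists_forall_dist_le (hp : ARBounded A.top p) {yn : ∀ n, X n} {y : Y}
    (hy : SumConv A.top yn y) : ∃ R, ∀ n, dist (p n) (yn n) ≤ R := by
  obtain ⟨x', y', hx', R, hR⟩ := hp
  obtain ⟨M, hM⟩ := (A.dist_conv _ _ _ _ hx' hy).bddAbove_range
  exact ⟨R + M, fun n ↦ (dist_triangle _ (x' n) _).trans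
    (add_le_add (hR n) (hM (Set.mem_range_self n)))⟩

theorem ARBounded.limsupDist_ne_top (hp : ARBounded A.top p) (F : Filter ℕ) (y : Y) :
    A.limsupDist p F y ≠ ∞ := by
  obtain ⟨R, hR⟩ := hp.exists_forall_dist_le (A.sumConv_approx y)
  have hle : A.limsupDist p F y ≤ ENNReal.ofReal R :=
    limsup_le_of_le (h := .of_forall fun n ↦ (edist_dist _ _).trans_le
      (ENNReal.ofReal_le_ofReal (hR n)))
  exact ne_top_of_le_ne_top ENNReal.ofReal_ne_top hle

theorem AsymptoticRelation.limsupDist_le_add_edist (A : AsymptoticRelation X Y) (p : ∀ n, X n)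
    (hF : F ≤ atTop) [F.NeBot] (y z : Y) :
    A.limsupDist p F z ≤ A.limsupDist p F y + edist y z :=
  calc A.limsupDist p F z
      ≤ limsup (fun n ↦ edist (p n) (A.approx y n) + edist (A.approx y n) (A.approx z n)) F :=
        limsup_le_limsup (.of_forall fun _ ↦ edist_triangle _ _ _)
    _ = A.limsupDist p F y + edist y z :=
        limsup_add_eq_of_tendsto _ (edist_ne_top y z)
          ((A.tendsto_edist (A.sumConv_approx y) (A.sumConv_approx z)).mono_left hF)

theorem AsymptoticRelation.continuous_limsupDist (A : AsymptoticRelation X Y) (p : ∀ n, X n)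
    (hF : F ≤ atTop) [F.NeBot] : Continuous (A.limsupDist p F) :=
  continuous_of_le_add_edist 1 ENNReal.one_ne_top fun z y ↦ by
    simpa only [one_mul, edist_comm z y] using A.limsupDist_le_add_edist p hF y z

theorem AsymptoticRelation.exists_sq_limsupDist_add_le (A : AsymptoticRelation X Y)
    (hX : ∀ n, IsCAT0Space (X n)) (hY : IsGeodesicSpace Y) (p : ∀ n, X n) (hF : F ≤ atTop)
    [F.NeBot] (y z : Y) :
    ∃ m, A.limsupDist p F m ^ 2 + (edist y z / 2) ^ 2
      ≤ max (A.limsupDist p F y) (A.limsupDist p F z) ^ 2 := by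
  obtain ⟨γ, hγ, rfl, rfl⟩ := hY y z
  choose γn hγn h₀ h₁ using fun n ↦ (hX n).geodesic (A.approx (γ 0) n) (A.approx (γ 1) n)
  have hm : SumConv A.top (fun n ↦ γn n (1 / 2)) (γ (1 / 2)) :=
    A.sumConv_geodesic hX hγn hγ (by simpa only [h₀] using A.sumConv_approx (γ 0))
      (by simpa only [h₁] using A.sumConv_approx (γ 1)) ⟨by norm_num, by norm_num⟩
  have hpow (u : ℕ → ℝ≥0∞) : limsup u F ^ 2 = limsup (fun n ↦ u n ^ 2) F :=
    (pow_left_mono 2).map_limsup_of_continuousAt u (ENNReal.continuous_pow 2).continuousAt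
  have hedist : Tendsto (fun n ↦ (edist (A.approx (γ 0) n) (A.approx (γ 1) n) / 2) ^ 2) F
      (𝓝 ((edist (γ 0) (γ 1) / 2) ^ 2)) :=
    ENNReal.Tendsto.pow (ENNReal.Tendsto.div_const
      ((A.tendsto_edist (A.sumConv_approx _) (A.sumConv_approx _)).mono_left hF) (by simp))
  refine ⟨γ (1 / 2), ?_⟩
  rw [← A.limsup_edist_eq hF p hm, hpow, ← limsup_add_eq_of_tendsto _
    (ENNReal.pow_ne_top (ENNReal.div_ne_top (edist_ne_top _ _) two_ne_zero)) hedist,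
    AsymptoticRelation.limsupDist, AsymptoticRelation.limsupDist, ← limsup_max, hpow]
  refine limsup_le_limsup (.of_forall fun n ↦ ?_)
  simpa only [h₀, h₁] using (hX n).sq_edist_midpoint_add_le (hγn n) (p n)

/-- The asymptotic radius of the sequence `p` along the filter `F`. -/
noncomputable def AsymptoticRelation.radius (A : AsymptoticRelation X Y) (p : ∀ n, X n)
    (F : Filter ℕ) : ℝ≥0∞ :=
  ⨅ y, A.limsupDist p F y

theorem AsymptoticRelation.limsupDist_mono (A : AsymptoticRelation X Y) (p : ∀ n, X n)
    (hFG : F ≤ G) (y : Y) : A.limsupDist p F y ≤ A.limsupDist p G y :=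
  limsup_le_limsup_of_le hFG

theorem AsymptoticRelation.radius_mono (A : AsymptoticRelation X Y) (p : ∀ n, X n) :
    Monotone (A.radius p) :=
  fun _ _ hFG ↦ iInf_mono (A.limsupDist_mono p hFG)

theorem ARBounded.radius_ne_top (hp : ARBounded A.top p) (F : Filter ℕ) : A.radius p F ≠ ∞ :=
  let ⟨_, y, _⟩ := hp
  ne_top_of_le_ne_top (hp.limsupDist_ne_top F y) (iInf_le _ y)

theorem AsymptoticRelation.sq_radius_add_le (A : AsymptoticRelation X Y)
    (hX : ∀ n, IsCAT0Space (X n)) (hY : IsGeodesicSpace Y) (p : ∀ n, X n) (hF : F ≤ atTop)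
    [F.NeBot] (y z : Y) :
    A.radius p F ^ 2 + (edist y z / 2) ^ 2
      ≤ max (A.limsupDist p F y) (A.limsupDist p F z) ^ 2 := by
  obtain ⟨m, hm⟩ := A.exists_sq_limsupDist_add_le hX hY p hF y z
  refine le_trans ?_ hm
  gcongr
  exact iInf_le _ m

theorem AsymptoticRelation.exists_limsupDist_eq_radius [CompleteSpace Y]
    (hX : ∀ n, IsCAT0Space (X n)) (hY : IsGeodesicSpace Y) (hF : F ≤ atTop) [F.NeBot]
    (hr : A.radius p F ≠ ∞) : ∃ c, A.limsupDist p F c = A.radius p F :=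
  exists_eq_iInf_of_sq_iInf_add_le (A.continuous_limsupDist p hF).lowerSemicontinuous hr
    (A.sq_radius_add_le hX hY p hF)

theorem AsymptoticRelation.eq_of_limsupDist_le_radius (hX : ∀ n, IsCAT0Space (X n))
    (hY : IsGeodesicSpace Y) (hF : F ≤ atTop) [F.NeBot] (hr : A.radius p F ≠ ∞) {y z : Y}
    (hy : A.limsupDist p F y ≤ A.radius p F) (hz : A.limsupDist p F z ≤ A.radius p F) :
    y = z := by
  have hsq : A.radius p F ^ 2 + (edist y z / 2) ^ 2 ≤ A.radius p F ^ 2 + 0 := by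
    rw [add_zero]
    refine (A.sq_radius_add_le hX hY p hF y z).trans ?_
    gcongr
    exact max_le hy hz
  have hzero := (ENNReal.add_le_add_iff_left (ENNReal.pow_ne_top hr)).1 hsq
  simpa using hzero

end AsymptoticCenter

section WeakConvergence

variable {X : ℕ → Type*} [∀ n, MetricSpace (X n)] {Y : Type*} [MetricSpace Y]
  {A : AsymptoticRelation X Y} {p q : ∀ n, X n} {F G : Filter ℕ} {c : Y}

/-- Weak convergence of the sequence `p` to `c` along a filter `F`, the filter version of
`ARWeakConv`. The projections are compared with the initial points `γn n 0 → c` rather than with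
`c` itself, because `SumConv` only speaks about limits along `atTop`. -/
def AsymptoticRelation.WeakConvAlong (A : AsymptoticRelation X Y) (p : ∀ n, X n) (F : Filter ℕ)
    (c : Y) : Prop :=
  ∀ (γn : ∀ n, ℝ → X n) (γ : ℝ → Y),
    (∀ n, IsGeodesic (γn n)) → IsGeodesic γ → γ 0 = c →
    SumConv A.top (fun n ↦ γn n 0) (γ 0) → SumConv A.top (fun n ↦ γn n 1) (γ 1) →
    ∀ P : ∀ n, X n, (∀ᶠ n in F, IsProjPt (γn n '' Set.Icc (0 : ℝ) 1) (p n) (P n)) →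
    Tendsto (fun n ↦ dist (γn n 0) (P n)) F (𝓝 0)

theorem AsymptoticRelation.WeakConvAlong.arWeakConv (h : A.WeakConvAlong p atTop c) :
    ARWeakConv A.top p c := by
  intro γn γ hγn hγ hγc h₀ h₁ P hP
  exact A.conv_of_dist_tendsto_zero _ P c (hγc ▸ h₀)
    (h γn γ hγn hγ hγc h₀ h₁ P (.of_forall hP))

theorem AsymptoticRelation.WeakConvAlong.congr (h : A.WeakConvAlong p F c)
    (hpq : ∀ᶠ n in F, p n = q n) : A.WeakConvAlong q F c := by
  intro γn γ hγn hγ hγc h₀ h₁ P hP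
  refine h γn γ hγn hγ hγc h₀ h₁ P ?_
  filter_upwards [hP, hpq] with n hn hpqn using hpqn ▸ hn

theorem AsymptoticRelation.WeakConvAlong.sup (hF : A.WeakConvAlong p F c)
    (hG : A.WeakConvAlong p G c) : A.WeakConvAlong p (F ⊔ G) c := by
  intro γn γ hγn hγ hγc h₀ h₁ P hP
  obtain ⟨hPF, hPG⟩ := eventually_sup.1 hP
  exact (hF γn γ hγn hγ hγc h₀ h₁ P hPF).sup (hG γn γ hγn hγ hγc h₀ h₁ P hPG)

theorem SumConv.weakConvAlong (hp : SumConv A.top p c) (hF : F ≤ atTop) :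
    A.WeakConvAlong p F c := by
  intro γn γ _ _ hγc h₀ _ P hP
  have hlim := ((A.dist_conv _ _ _ _ hp h₀).add (A.dist_conv _ _ _ _ hp h₀)).mono_left hF
  rw [hγc, dist_self, add_zero] at hlim
  refine squeeze_zero' (.of_forall fun _ ↦ dist_nonneg) ?_ hlim
  filter_upwards [hP] with n hn
  calc dist (γn n 0) (P n) ≤ dist (p n) (γn n 0) + dist (p n) (P n) := dist_triangle_left _ _ _
    _ ≤ dist (p n) (γn n 0) + dist (p n) (γn n 0) := by
        gcongr; exact hn.2 _ (Set.mem_image_of_mem _ (by simp))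

theorem AsymptoticRelation.limsupDist_le_of_isProjPt (A : AsymptoticRelation X Y)
    (hX : ∀ n, IsCAT0Space (X n)) {γn : ∀ n, ℝ → X n} {γ : ℝ → Y}
    (hγn : ∀ n, IsGeodesic (γn n)) (hγ : IsGeodesic γ)
    (h₀ : SumConv A.top (fun n ↦ γn n 0) (γ 0)) (h₁ : SumConv A.top (fun n ↦ γn n 1) (γ 1))
    (hF : F ≤ atTop) {t : ℕ → ℝ} {τ : ℝ} (hτ : τ ∈ Set.Icc (0 : ℝ) 1) (htτ : Tendsto t F (𝓝 τ))
    (ht : ∀ᶠ n in F, t n ∈ Set.Icc (0 : ℝ) 1 ∧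
      IsProjPt (γn n '' Set.Icc (0 : ℝ) 1) (p n) (γn n (t n))) :
    A.limsupDist p F (γ τ) ≤ A.limsupDist p F (γ 0) := by
  have hclose : Tendsto (fun n ↦ edist (γn n (t n)) (γn n τ)) F (𝓝 0) := by
    have hlim := (htτ.sub_const τ).abs.mul ((A.dist_conv _ _ _ _ h₀ h₁).mono_left hF)
    rw [sub_self, abs_zero, zero_mul] at hlim
    have hlim' := ENNReal.tendsto_ofReal hlim
    rw [ENNReal.ofReal_zero] at hlim'
    refine hlim'.congr' (ht.mono fun n hn ↦ ?_)
    simp only [edist_dist, hγn n _ hn.1 _ hτ]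
  rw [← A.limsup_edist_eq hF p (A.sumConv_geodesic hX hγn hγ h₀ h₁ hτ),
    ← A.limsup_edist_eq hF p h₀]
  refine (limsup_edist_le_of_tendsto p hclose).trans (limsup_le_limsup (ht.mono fun n hn ↦ ?_))
  simp only [edist_dist]
  exact ENNReal.ofReal_le_ofReal (hn.2.2 _ (Set.mem_image_of_mem _ (by simp)))

/-- The sequence `p` is regular along `F` if its asymptotic radius does not drop along finer
filters; countably generated ones suffice for extracting subsequences. -/
def AsymptoticRelation.IsRegularAlong (A : AsymptoticRelation X Y) (p : ∀ n, X n)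
    (F : Filter ℕ) : Prop :=
  ∀ G ≤ F, G.NeBot → G.IsCountablyGenerated → A.radius p G = A.radius p F

theorem AsymptoticRelation.exists_isRegularAlong (A : AsymptoticRelation X Y) (p : ∀ n, X n)
    {F₀ : Filter ℕ} [F₀.NeBot] [F₀.IsCountablyGenerated] (hF₀ : F₀ ≤ atTop) :
    ∃ S : Set ℕ, (atTop ⊓ 𝓟 S).NeBot ∧ atTop ⊓ 𝓟 S ≤ F₀ ∧ A.IsRegularAlong p (atTop ⊓ 𝓟 S) := by
  obtain ⟨F, hFF₀, hne, hcg, hF⟩ :=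
    exists_isCountablyGenerated_le_forall_le_eq (A.radius_mono p) F₀
  obtain ⟨S, hSne, hS⟩ := exists_atTop_inf_principal_le (hFF₀.trans hF₀)
  exact ⟨S, hSne, hS.trans hFF₀, fun G hG hGne hGcg ↦
    (hF G (hG.trans hS) hGne hGcg).trans (hF _ hS hSne inferInstance).symm⟩

theorem AsymptoticRelation.IsRegularAlong.weakConvAlong (hreg : A.IsRegularAlong p F)
    (hX : ∀ n, IsCAT0Space (X n)) (hY : IsGeodesicSpace Y) (hp : ARBounded A.top p)
    (hF : F ≤ atTop) [F.IsCountablyGenerated] (hc : A.limsupDist p F c ≤ A.radius p F) :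
    A.WeakConvAlong p F c := by
  rintro γn γ hγn hγ rfl h₀ h₁ P hP
  obtain ⟨t, ht⟩ := Filter.skolem.1 (hP.mono fun n hn ↦ hn.1)
  refine tendsto_of_subseq_tendsto fun ns hns ↦ ?_
  obtain ⟨τ, hτ, φ, hφ, hlim⟩ := isCompact_Icc.tendsto_subseq'
    ((hns.eventually ht).mono fun k hk ↦ hk.1).frequently
  let G := map (ns ∘ φ) atTop
  have hGF : G ≤ F := hns.comp hφ.tendsto_atTop
  have htτ : Tendsto t G (𝓝 τ) := tendsto_map'_iff.2 hlim
  have hle : A.limsupDist p G (γ τ) ≤ A.limsupDist p G (γ 0) := by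
    refine A.limsupDist_le_of_isProjPt hX hγn hγ h₀ h₁ (hGF.trans hF) hτ htτ ?_
    filter_upwards [hGF ht, hGF hP] with n hn hPn using ⟨hn.1, hn.2 ▸ hPn⟩
  have hcG : A.limsupDist p G (γ 0) ≤ A.radius p G :=
    (A.limsupDist_mono p hGF _).trans
      (hc.trans_eq (hreg G hGF inferInstance inferInstance).symm)
  have hγτ : γ 0 = γ τ :=
    A.eq_of_limsupDist_le_radius hX hY (hGF.trans hF) (hp.radius_ne_top G) hcG (hle.trans hcG)
  have hzero := htτ.mul ((A.dist_conv _ _ _ _ h₀ h₁).mono_left (hGF.trans hF))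
  rw [← hγ.dist_zero_left hτ, ← hγτ, dist_self] at hzero
  have hG : Tendsto (fun n ↦ dist (γn n 0) (P n)) G (𝓝 0) := by
    refine hzero.congr' ?_
    filter_upwards [hGF ht] with n hn
    rw [← hn.2, (hγn n).dist_zero_left hn.1]
  exact ⟨φ, hG.comp tendsto_map⟩

theorem ARBounded.exists_arWeakConv [CompleteSpace Y] (hp : ARBounded A.top p)
    (hX : ∀ n, IsCAT0Space (X n)) (hY : IsGeodesicSpace Y) {F : Filter ℕ} [F.NeBot]
    [F.IsCountablyGenerated] (hF : F ≤ atTop) :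
    ∃ (c : Y) (q : ∀ n, X n), ARBounded A.top q ∧ ARWeakConv A.top q c ∧
      ∃ᶠ n in F, q n = p n := by
  obtain ⟨S, hSne, hSF, hreg⟩ := A.exists_isRegularAlong p hF
  obtain ⟨c, hc⟩ :=
    A.exists_limsupDist_eq_radius hX hY inf_le_left (hp.radius_ne_top (atTop ⊓ 𝓟 S))
  let q := S.piecewise p (A.approx c)
  have hqS : ∀ᶠ n in atTop ⊓ 𝓟 S, p n = q n :=
    eventually_inf_principal.2 (.of_forall fun n hn ↦ (S.piecewise_eq_of_mem _ _ hn).symm)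
  have hqSc : ∀ᶠ n in atTop ⊓ 𝓟 Sᶜ, A.approx c n = q n :=
    eventually_inf_principal.2 (.of_forall fun n hn ↦ (S.piecewise_eq_of_notMem _ _ hn).symm)
  have hweak := ((hreg.weakConvAlong hX hY hp inf_le_left hc.le).congr hqS).sup
    (((A.sumConv_approx c).weakConvAlong inf_le_left).congr hqSc)
  rw [← inf_sup_left, sup_principal, Set.union_compl_self, principal_univ, inf_top_eq] at hweak
  obtain ⟨R, hR⟩ := hp.exists_forall_dist_le (A.sumConv_approx c)
  refine ⟨c, q, ⟨_, c, A.sumConv_approx c, max R 0, fun n ↦ ?_⟩, hweak.arWeakConv,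
    (hqS.mono fun n hn ↦ hn.symm).frequently.filter_mono hSF⟩
  by_cases hn : n ∈ S
  · simpa only [q, S.piecewise_eq_of_mem _ _ hn] using (hR n).trans (le_max_left R 0)
  · simp only [q, S.piecewise_eq_of_notMem _ _ hn, dist_self, le_max_right]

theorem SumConv.arBounded (hp : SumConv A.top p c) : ARBounded A.top p :=
  ⟨p, c, hp, 0, fun _ ↦ (dist_self _).le⟩

theorem ARWeakConv.exists_sumConv_dist_le (hq : ARWeakConv A.top q c)
    (hX : ∀ n, IsCAT0Space (X n)) (hY : IsGeodesicSpace Y) {xn : ∀ n, X n} {x : Y}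
    (hx : SumConv A.top xn x) :
    ∃ P : ∀ n, X n, SumConv A.top P c ∧ ∀ n, dist (xn n) (P n) ≤ dist (xn n) (q n) := by
  choose γn hγn h₀ h₁ using fun n ↦ (hX n).geodesic (A.approx c n) (xn n)
  obtain ⟨γ, hγ, hγ₀, hγ₁⟩ := hY c x
  choose P hP using fun n ↦ (hγn n).exists_isProjPt (q n)
  refine ⟨P, hq γn γ hγn hγ hγ₀ ?_ ?_ P hP, fun n ↦ ?_⟩
  · simpa only [h₀, hγ₀] using A.sumConv_approx c
  · simpa only [h₁, hγ₁] using hx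
  · simpa only [h₁, dist_comm (xn n)] using (hX n).dist_le_of_isProjPt (hγn n) (hP n)

end WeakConvergence

section MoscoConvergence

variable {X : ℕ → Type*} [∀ n, MetricSpace (X n)] {Y : Type*} [MetricSpace Y]
  {A : AsymptoticRelation X Y}

theorem ARMosco.moreauObjective {fn : ∀ n, X n → EReal} {f : Y → EReal}
    (hM : ARMosco A.top fn f) (hX : ∀ n, IsCAT0Space (X n)) (hY : IsGeodesicSpace Y)
    {lam : ℝ} (hlam : 0 ≤ lam) {xn : ∀ n, X n} {x : Y} (hx : SumConv A.top xn x) :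
    ARMosco A.top (fun n ↦ moreauObjective (fn n) lam (xn n)) (moreauObjective f lam x) := by
  have hquad {y : ∀ n, X n} {c : Y} (hy : SumConv A.top y c) :
      Tendsto (fun n ↦ dist (xn n) (y n) ^ 2 / (2 * lam)) atTop
        (𝓝 (dist x c ^ 2 / (2 * lam))) :=
    ((A.dist_conv _ _ _ _ hx hy).pow 2).div_const _
  refine ⟨fun c q hq hqc ↦ ?_, fun c ↦ ?_⟩
  · obtain ⟨P, hP, hPq⟩ := hqc.exists_sumConv_dist_le hX hY hx
    calc _root_.moreauObjective f lam x c
        ≤ liminf (fun n ↦ fn n (q n)) atTop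
          + liminf (fun n ↦ ((dist (xn n) (P n) ^ 2 / (2 * lam) : ℝ) : EReal)) atTop :=
          add_le_add (hM.1 c q hq hqc) (EReal.tendsto_coe.2 (hquad hP)).liminf_eq.ge
      _ ≤ liminf (fun n ↦ fn n (q n) + ((dist (xn n) (P n) ^ 2 / (2 * lam) : ℝ) : EReal)) atTop :=
          EReal.le_liminf_add
      _ ≤ liminf (fun n ↦ _root_.moreauObjective (fn n) lam (xn n) (q n)) atTop := by
          refine liminf_le_liminf (.of_forall fun n ↦ add_le_add_right ?_ _)
          exact EReal.coe_le_coe_iff.2 (by gcongr; exact hPq n)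
  · obtain ⟨y, hy, hfy⟩ := hM.2 c
    exact ⟨y, hy, tendsto_ereal_add_coe hfy (hquad hy)⟩

theorem ARMosco.le_liminf_of_forall_le [CompleteSpace Y] {φn : ∀ n, X n → EReal}
    {φ : Y → EReal} (hM : ARMosco A.top φn φ) (hX : ∀ n, IsCAT0Space (X n))
    (hY : IsGeodesicSpace Y) {m : EReal} (hm : ∀ c, m ≤ φ c) {z : ∀ n, X n}
    (hz : ARBounded A.top z) : m ≤ liminf (fun n ↦ φn n (z n)) atTop := by
  by_contra! hlt
  obtain ⟨a, hza, ham⟩ := exists_between hlt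
  have : (atTop ⊓ 𝓟 {n | φn n (z n) < a}).NeBot :=
    frequently_iff_neBot.1 (frequently_lt_of_liminf_lt (h := hza))
  obtain ⟨c, q, hq, hqc, hqz⟩ :=
    hz.exists_arWeakConv hX hY (inf_le_left : atTop ⊓ 𝓟 {n | φn n (z n) < a} ≤ atTop)
  have hlow : ∀ᶠ n in atTop, a < φn n (q n) :=
    eventually_lt_of_lt_liminf (ham.trans_le ((hm c).trans (hM.1 c q hq hqc)))
  have hupp : ∀ᶠ n in atTop ⊓ 𝓟 {n | φn n (z n) < a}, φn n (z n) < a :=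
    mem_inf_of_right (mem_principal_self _)
  obtain ⟨n, hqn, hzn, han⟩ :=
    (hqz.and_eventually (hupp.and (hlow.filter_mono inf_le_left))).exists
  exact (han.trans (hqn ▸ hzn)).false

theorem ARMosco.sumConv_and_tendsto_of_forall_le [CompleteSpace Y] {φn : ∀ n, X n → EReal}
    {φ : Y → EReal} (hM : ARMosco A.top φn φ) (hX : ∀ n, IsCAT0Space (X n))
    (hY : IsGeodesicSpace Y) {β : ℝ} (hβ : 0 < β) (hφn : ∀ n, StronglyConvexWith β (φn n))
    {p : Y} (hp : ∀ y, φ p ≤ φ y) (hbot : φ p ≠ ⊥) (htop : φ p ≠ ⊤) {pn : ∀ n, X n}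
    (hpn : ∀ n y, φn n (pn n) ≤ φn n y) :
    SumConv A.top pn p ∧ Tendsto (fun n ↦ φn n (pn n)) atTop (𝓝 (φ p)) := by
  obtain ⟨m, hm⟩ : ∃ m : ℝ, φ p = m := ⟨_, (EReal.coe_toReal htop hbot).symm⟩
  obtain ⟨yn, hyn, hφyn⟩ := hM.2 p
  let r n := min (dist (yn n) (pn n) / 2) 1
  have hr n : 0 ≤ r n := le_min (by positivity) zero_le_one
  choose zn hzn hφzn using fun n ↦ (hφn n).exists_dist_eq_add_le (hX n).geodesic hβ.le
    (hpn n (yn n)) (hr n) (by linarith [min_le_left (dist (yn n) (pn n) / 2) 1])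
  have hzb : ARBounded A.top zn :=
    ⟨yn, p, hyn, 1, fun n ↦ by rw [dist_comm, hzn n]; exact min_le_right _ _⟩
  have hβr : Tendsto (fun n ↦ β * r n ^ 2) atTop (𝓝 0) :=
    tendsto_zero_of_add_le_of_le_liminf (fun n ↦ by positivity) hφzn
      (hm ▸ hM.le_liminf_of_forall_le hX hY hp hzb) (hm ▸ hφyn)
  have hconv : SumConv A.top pn p := by
    refine A.conv_of_dist_tendsto_zero yn pn p hyn ?_
    have hhalf := tendsto_zero_of_mul_sq_min hβ.ne' (fun n ↦ by positivity) hβr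
    simpa only [mul_div_cancel₀ _ (two_ne_zero' ℝ), mul_zero] using hhalf.const_mul 2
  refine ⟨hconv, tendsto_of_le_liminf_of_limsup_le
    (hM.le_liminf_of_forall_le hX hY hp hconv.arBounded) ?_⟩
  calc limsup (fun n ↦ φn n (pn n)) atTop ≤ limsup (fun n ↦ φn n (yn n)) atTop :=
        limsup_le_limsup (.of_forall fun n ↦ hpn n (yn n))
    _ = φ p := hφyn.limsup_eq

end MoscoConvergence

theorem mosco_implies_resolvent_convergence_asymptotic_relation_general
    {Hn : ℕ → Type*} [∀ n, MetricSpace (Hn n)] {H : Type*} [MetricSpace H] [CompleteSpace H]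
    (hHn : ∀ n, IsCAT0Space (Hn n)) (hH : IsGeodesicSpace H) (A : AsymptoticRelation Hn H)
    {f : H → EReal} {fn : ∀ n, Hn n → EReal} (hf : ∃ y, f y ≠ ⊤) (hf' : ∀ y, f y ≠ ⊥)
    (hfn : ∀ n, ConvexFun (fn n)) {x : H} {xn : ∀ n, Hn n} (hx : SumConv A.top xn x)
    (hM : ARMosco A.top fn f) {lam : ℝ} (hlam : 0 < lam) {p : H} (hp : IsResolventPt f lam x p)
    {pn : ∀ n, Hn n} (hpn : ∀ n, IsResolventPt (fn n) lam (xn n) (pn n)) :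
    Tendsto (fun n ↦ MoreauEnv (fn n) lam (xn n)) atTop (𝓝 (MoreauEnv f lam x)) ∧
      SumConv A.top pn p := by
  have hbot : moreauObjective f lam x p ≠ ⊥ := EReal.add_ne_bot_iff.2 ⟨hf' p, EReal.coe_ne_bot _⟩
  have htop : moreauObjective f lam x p ≠ ⊤ :=
    EReal.add_ne_top (hp.ne_top hf) (EReal.coe_ne_top _)
  obtain ⟨hconv, hval⟩ := (hM.moreauObjective hHn hH hlam.le hx).sumConv_and_tendsto_of_forall_le
    hHn hH (β := 1 / (2 * lam)) (by positivity)
    (fun n ↦ (hfn n).stronglyConvexWith_moreauObjective (hHn n) hlam.le (xn n))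
    hp hbot htop hpn
  simp only [hp.moreauEnv_eq, (hpn _).moreauEnv_eq]
  exact ⟨hval, hconv⟩

/-- Mosco convergence along an asymptotic relation between Hadamard spaces
implies convergence of Moreau–Yosida envelopes and of resolvents. -/
theorem mosco_implies_resolvent_convergence_asymptotic_relation
    {Hn : ℕ → Type*} [∀ n, MetricSpace (Hn n)] [∀ n, CompleteSpace (Hn n)]
    {H : Type*} [MetricSpace H] [CompleteSpace H]
    (hHn : ∀ n, HadamardSpace (Hn n)) (hH : HadamardSpace H)
    (A : AsymptoticRelation Hn H)
    (f : H → EReal) (fn : ∀ n, Hn n → EReal)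
    (hf : ProperConvexLsc f) (hfn : ∀ n, ProperConvexLsc (fn n))
    (x : H) (xn : ∀ n, Hn n) (hx : SumConv A.top xn x)
    (hM : ARMosco A.top fn f)
    (J : ℝ → H) (hJ : ∀ lam > (0:ℝ), IsResolventPt f lam x (J lam))
    (Jn : ℝ → ∀ n, Hn n)
    (hJn : ∀ lam > (0:ℝ), ∀ n, IsResolventPt (fn n) lam (xn n) (Jn lam n)) :
    ∀ lam > (0:ℝ),
      Tendsto (fun n => MoreauEnv (fn n) lam (xn n)) atTop (𝓝 (MoreauEnv f lam x)) ∧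
      SumConv A.top (Jn lam) (J lam) := by
  intro lam hlam
  exact mosco_implies_resolvent_convergence_asymptotic_relation_general
    (fun n ↦ (hHn n).isCAT0Space) hH.geodesic A hf.1 hf.2.1 (fun n ↦ (hfn n).2.2.1) hx hM hlam
    (hJ lam hlam) (hJn lam hlam)
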